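/- arXiv:2212.01917 — 7 statements merged into one kernel-verified Lean document; each statement's English description precedes it below -/
import Mathlib

section
/- Let L be a finite group acting on a finite set X, let T be a subgroup of L, and let X' ⊆ X be a subset such that T ≤ L_x for all x ∈ X', where L_x denotes the stabilizer of x in L. Set ℒ := {L_x : x ∈ X'}, ℛ := {E ⊆ ℒ : ∩_{K∈E} K ≠ T}, and 𝒮 := {Q ⊆ X' : ∩_{x∈Q} L_x ≠ T}, where an empty intersection is taken to be L. Then Σ_{E∈ℛ} (−1)^{|E|} = Σ_{Q∈𝒮} (−1)^{|Q|}. -/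
variable {L X : Type*} [Group L] [Finite L] [Finite X] [MulAction L X]

/-- The family `ℒ = {L_x : x ∈ X'}` of stabilizers of points of `X'`. -/
def stabFam (X' : Set X) : Set (Subgroup L) :=
  (fun x => MulAction.stabilizer L x) '' X'

/-- `ℛ`: subsets `E` of `ℒ` with `∩_{K ∈ E} K ≠ T` (the empty intersection being `L`). -/
def famR (X' : Set X) (T : Subgroup L) : Set (Set (Subgroup L)) :=
  {E | E ⊆ stabFam X' ∧ sInf E ≠ T}

/-- `𝒮`: subsets `Q` of `X'` with `∩_{x ∈ Q} L_x ≠ T` (the empty intersection being `L`). -/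
def famS (X' : Set X) (T : Subgroup L) : Set (Set X) :=
  {Q | Q ⊆ X' ∧ (⨅ x ∈ Q, MulAction.stabilizer L x) ≠ T}

/-- `𝒮_E`: the elements `Q` of `𝒮` with `{L_x : x ∈ Q} = E`. -/
def famSE (X' : Set X) (T : Subgroup L) (E : Set (Subgroup L)) : Set (Set X) :=
  {Q | Q ⊆ X' ∧ (⨅ x ∈ Q, MulAction.stabilizer L x) ≠ T ∧
    (fun x => MulAction.stabilizer L x) '' Q = E}

open Classical in
theorem aux_sum_cancel {Y : Type*} (B : Finset Y) (b : Y) (hb : b ∈ B) (g : Finset Y → ℤ) :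
    ∑ E ∈ B.powerset, (-1 : ℤ) ^ E.card * g (insert b E) = 0 := by
  rw [← Finset.insert_erase hb, Finset.sum_powerset_insert (Finset.notMem_erase b B),
    ← Finset.sum_add_distrib]
  apply Finset.sum_eq_zero
  intro E hE
  have hbE : b ∉ E := fun h => Finset.notMem_erase b B (Finset.mem_powerset.1 hE h)
  rw [Finset.card_insert_of_notMem hbE, Finset.insert_idem]
  ring

open Classical in
theorem aux_sum_image {Z Y : Type*} (f : Z → Y) (A : Finset Z) : ∀ g : Finset Y → ℤ,
    ∑ Q ∈ A.powerset, (-1 : ℤ) ^ Q.card * g (Q.image f) =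
      ∑ E ∈ (A.image f).powerset, (-1 : ℤ) ^ E.card * g E := by
  induction A using Finset.induction_on with
  | empty => intro g; simp
  | insert a A ha ih =>
    intro g
    have h2 : ∑ Q ∈ A.powerset, (-1 : ℤ) ^ (insert a Q).card * g ((insert a Q).image f) =
        - ∑ E ∈ (A.image f).powerset, (-1 : ℤ) ^ E.card * g (insert (f a) E) := by
      rw [← ih (fun E => g (insert (f a) E)), ← Finset.sum_neg_distrib]
      apply Finset.sum_congr rfl
      intro Q hQ
      have haQ : a ∉ Q := fun h => ha (Finset.mem_powerset.1 hQ h)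
      rw [Finset.card_insert_of_notMem haQ, Finset.image_insert]
      ring
    rw [Finset.sum_powerset_insert ha, h2, ih g, Finset.image_insert]
    by_cases hf : f a ∈ A.image f
    · rw [aux_sum_cancel _ _ hf, Finset.insert_eq_of_mem hf]
      simp
    · rw [Finset.sum_powerset_insert hf, ← Finset.sum_neg_distrib]
      congr 1
      apply Finset.sum_congr rfl
      intro E hE
      have haE : f a ∉ E := fun h => hf (Finset.mem_powerset.1 hE h)
      rw [Finset.card_insert_of_notMem haE]
      ring

open Classical in
theorem aux_finsum {Y : Type*} (A : Finset Y) (P : Set Y → Prop) :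
    ∑ᶠ E ∈ {E : Set Y | E ⊆ ↑A ∧ P E}, (-1 : ℤ) ^ E.ncard =
      ∑ E ∈ A.powerset, (-1 : ℤ) ^ E.card * (if P ↑E then 1 else 0) := by
  have h : {E : Set Y | E ⊆ ↑A ∧ P E} = (fun E : Finset Y => (E : Set Y)) ''
      ((A.powerset.filter (fun E => P ↑E) : Finset (Finset Y)) : Set (Finset Y)) := by
    ext E
    constructor
    · rintro ⟨h1, h2⟩
      obtain ⟨F, rfl⟩ := (A.finite_toSet.subset h1).exists_finset_coe
      exact ⟨F, by simpa using ⟨by exact_mod_cast h1, h2⟩, rfl⟩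
    · rintro ⟨F, hF, rfl⟩
      simpa using hF
  rw [h, finsum_mem_image (Finset.coe_injective.injOn), finsum_mem_coe_finset, Finset.sum_filter]
  simp

/-- Lemma 4.1: `Σ_{E ∈ ℛ} (−1)^{|E|} = Σ_{Q ∈ 𝒮} (−1)^{|Q|}`. -/
theorem sum_famR_eq_sum_famS (T : Subgroup L) (X' : Set X)
    (hT : ∀ x ∈ X', T ≤ MulAction.stabilizer L x) :
    (∑ᶠ E ∈ famR (L := L) X' T, ((-1 : ℤ) ^ E.ncard)) =
      ∑ᶠ Q ∈ famS (L := L) X' T, ((-1 : ℤ) ^ Q.ncard) := by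
  classical
  obtain ⟨A, rfl⟩ := (Set.toFinite X').exists_finset_coe
  have h1 := aux_finsum A (fun Q => (⨅ x ∈ Q, MulAction.stabilizer L x) ≠ T)
  have h2 := aux_finsum (A.image (fun x => MulAction.stabilizer L x)) (fun E => sInf E ≠ T)
  have h3 := aux_sum_image (fun x => MulAction.stabilizer L x) A
    (fun E => if sInf (E : Set (Subgroup L)) ≠ T then 1 else 0)
  have e1 : famR (L := L) (A : Set X) T = {E : Set (Subgroup L) |
      E ⊆ ↑(A.image (fun x => MulAction.stabilizer L x)) ∧ sInf E ≠ T} := by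
    simp only [famR, stabFam, Finset.coe_image]
  have e2 : famS (L := L) (A : Set X) T = {Q : Set X |
      Q ⊆ ↑A ∧ (⨅ x ∈ Q, MulAction.stabilizer L x) ≠ T} := rfl
  rw [e1, e2, h1, h2]
  simp only [Finset.coe_image, sInf_image] at h3
  convert h3.symm
end

section
/- Let V be a vector space of finite dimension over the finite field F_q and let H ≤ G ≤ GL(V) be subgroups. Then Σ_{E∈Ψ'(G,H)} (−1)^{|E|} = Σ_{X∈Ψ(G,H)} (−1)^{|X|}. -/
variable {F V : Type*} [Field F] [AddCommGroup V] [Module F V]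

/-- The stabilizer in `G` of a subspace `W` of `V`: `{g ∈ G : gW = W}`. -/
def sstab (G : Subgroup (V ≃ₗ[F] V)) (W : Submodule F V) : Subgroup (V ≃ₗ[F] V) where
  carrier := {g | g ∈ G ∧ Submodule.map (g : V →ₗ[F] V) W = W}
  one_mem' := ⟨G.one_mem, by simp⟩
  mul_mem' := by
    rintro a b ⟨ha, ha'⟩ ⟨hb, hb'⟩
    refine ⟨G.mul_mem ha hb, ?_⟩
    rw [show ((a * b : V ≃ₗ[F] V) : V →ₗ[F] V) = (a : V →ₗ[F] V).comp (b : V →ₗ[F] V) from rfl,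
      Submodule.map_comp, hb', ha']
  inv_mem' := by
    rintro a ⟨ha, ha'⟩
    refine ⟨G.inv_mem ha, ?_⟩
    conv_lhs => rw [← ha']
    rw [← Submodule.map_comp]
    rw [show ((a⁻¹ : V ≃ₗ[F] V) : V →ₗ[F] V).comp (a : V →ₗ[F] V) = LinearMap.id from by
      ext x; exact a.symm_apply_apply x]
    exact Submodule.map_id W

/-- The family `C(G,H)` of stabilizers of proper non-trivial subspaces of `V` containing `H`. -/
def Cfam (G H : Subgroup (V ≃ₗ[F] V)) : Set (Subgroup (V ≃ₗ[F] V)) :=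
  {M | ∃ W : Submodule F V, W ≠ ⊥ ∧ W ≠ ⊤ ∧ H ≤ sstab G W ∧ M = sstab G W}

/-- `S(V,H)*`: the proper non-trivial `H`-invariant subspaces of `V`. -/
def SStar (H : Subgroup (V ≃ₗ[F] V)) : Set (Submodule F V) :=
  {W | W ≠ ⊥ ∧ W ≠ ⊤ ∧ ∀ g ∈ H, Submodule.map ((g : V ≃ₗ[F] V) : V →ₗ[F] V) W = W}

/-- `Ψ(G,H)`: subsets of `C(G,H)` whose intersection (taken to be `G` when empty) is not `H`. -/
def Psi (G H : Subgroup (V ≃ₗ[F] V)) : Set (Set (Subgroup (V ≃ₗ[F] V))) :=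
  {X | X ⊆ Cfam G H ∧ G ⊓ sInf X ≠ H}

/-- `Ψ(G,H)ᶜ`: non-empty subsets of `C(G,H)` whose intersection is exactly `H`. -/
def PsiC (G H : Subgroup (V ≃ₗ[F] V)) : Set (Set (Subgroup (V ≃ₗ[F] V))) :=
  {Y | Y ⊆ Cfam G H ∧ Y ≠ ∅ ∧ G ⊓ sInf Y = H}

/-- `Ψ'(G,H)`: subsets `E` of `S(V,H)*` with `∩_{W ∈ E} stab_G(W) ≠ H`
(the empty intersection being `G`). -/
def Psi' (G H : Subgroup (V ≃ₗ[F] V)) : Set (Set (Submodule F V)) :=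
  {E | E ⊆ SStar H ∧ (G ⊓ ⨅ W ∈ E, sstab G W) ≠ H}

/-- The reducible subgroup ideal `I(G,H)`. -/
def redIdeal (G H : Subgroup (V ≃ₗ[F] V)) : Set (Subgroup (V ≃ₗ[F] V)) :=
  {K | ∃ M ∈ Cfam G H, H ≤ K ∧ K ≤ M}

/-- The poset `Î(G,H) = I(G,H) ∪ {H, G}`. -/
def Ihat (G H : Subgroup (V ≃ₗ[F] V)) : Set (Subgroup (V ≃ₗ[F] V)) :=
  redIdeal G H ∪ {H, G}

/-- A subgroup `K ≤ GL(V)` is irreducible if the only `K`-invariant subspaces are `0` and `V`. -/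
def IsIrred (K : Subgroup (V ≃ₗ[F] V)) : Prop :=
  ∀ W : Submodule F V, (∀ g ∈ K, Submodule.map ((g : V ≃ₗ[F] V) : V →ₗ[F] V) W = W) →
    W = ⊥ ∨ W = ⊤

/-- `mu` is the Möbius function of the subposet of the subgroup lattice given by `S`,
ordered by inclusion: `mu x y = 0` unless `x ≤ y`, `mu x x = 1`, and
`∑_{x ≤ t ≤ y} mu x t = 0` whenever `x < y` (all elements ranging in `S`). -/
def IsMobius (S : Set (Subgroup (V ≃ₗ[F] V)))
    (mu : Subgroup (V ≃ₗ[F] V) → Subgroup (V ≃ₗ[F] V) → ℤ) : Prop :=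
  (∀ x ∈ S, ∀ y ∈ S, ¬x ≤ y → mu x y = 0) ∧
  (∀ x ∈ S, mu x x = 1) ∧
  (∀ x ∈ S, ∀ y ∈ S, x < y → (∑ᶠ t ∈ {t | t ∈ S ∧ x ≤ t ∧ t ≤ y}, mu x t) = 0)

theorem aux_fiber {α β : Type*} [DecidableEq α] [DecidableEq β] (f : α → β) (S : Finset α) :
    ∀ X : Finset β, X ⊆ S.image f →
      ∑ E ∈ S.powerset with E.image f = X, (-1 : ℤ) ^ E.card = (-1) ^ X.card := by
  intro X
  induction X using Finset.strongInduction with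
  | H X ih =>
    intro hX
    have h1 : ∑ Y ∈ X.powerset, ∑ E ∈ S.powerset with E.image f = Y, (-1 : ℤ) ^ E.card
        = ∑ E ∈ (S.filter (fun a => f a ∈ X)).powerset, (-1 : ℤ) ^ E.card := by
      rw [← Finset.sum_fiberwise_of_maps_to (s := (S.filter (fun a => f a ∈ X)).powerset)
        (t := X.powerset) (g := fun E => E.image f)]
      · refine Finset.sum_congr rfl fun Y hY => Finset.sum_congr ?_ fun _ _ => rfl
        ext E
        simp only [Finset.mem_filter, Finset.mem_powerset, Finset.subset_iff] at hY ⊢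
        constructor
        · rintro ⟨h, rfl⟩
          exact ⟨fun a ha => ⟨h ha, hY (Finset.mem_image_of_mem f ha)⟩, rfl⟩
        · rintro ⟨h, rfl⟩
          exact ⟨fun a ha => (h ha).1, rfl⟩
      · intro E hE
        simp only [Finset.mem_powerset, Finset.subset_iff, Finset.mem_filter,
          Finset.mem_image] at hE ⊢
        rintro _ ⟨a, ha, rfl⟩
        exact (hE ha).2
    have h2 : (S.filter (fun a => f a ∈ X)) = ∅ ↔ X = ∅ := by
      constructor
      · intro h
        rw [Finset.eq_empty_iff_forall_notMem] at h ⊢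
        intro b hb
        obtain ⟨a, ha, rfl⟩ := Finset.mem_image.1 (hX hb)
        exact h a (Finset.mem_filter.2 ⟨ha, hb⟩)
      · rintro rfl
        simp
    have h3 : ∑ Y ∈ X.powerset, ∑ E ∈ S.powerset with E.image f = Y, (-1 : ℤ) ^ E.card
        = ∑ Y ∈ X.powerset, (-1 : ℤ) ^ Y.card := by
      rw [h1, Finset.sum_powerset_neg_one_pow_card, Finset.sum_powerset_neg_one_pow_card]
      simp only [h2]
    rw [← Finset.add_sum_erase _ _ (Finset.mem_powerset_self X),
      ← Finset.add_sum_erase _ (fun Y => (-1 : ℤ) ^ Y.card) (Finset.mem_powerset_self X)] at h3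
    have h4 : ∑ Y ∈ X.powerset.erase X, ∑ E ∈ S.powerset with E.image f = Y, (-1 : ℤ) ^ E.card
        = ∑ Y ∈ X.powerset.erase X, (-1 : ℤ) ^ Y.card := by
      refine Finset.sum_congr rfl fun Y hY => ?_
      rw [Finset.mem_erase, Finset.mem_powerset] at hY
      exact ih Y (Finset.ssubset_iff_subset_ne.2 ⟨hY.2, hY.1⟩) (hY.2.trans hX)
    rw [h4] at h3
    exact add_right_cancel h3

theorem aux_finset {α β : Type*} [DecidableEq α] [DecidableEq β] (f : α → β) (S : Finset α)
    (P : Finset β → Prop) [DecidablePred P] :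
    ∑ E ∈ S.powerset with P (E.image f), (-1 : ℤ) ^ E.card
      = ∑ X ∈ (S.image f).powerset with P X, (-1 : ℤ) ^ X.card := by
  rw [← Finset.sum_fiberwise_of_maps_to (t := (S.image f).powerset.filter P)
    (g := fun E => E.image f)]
  · refine Finset.sum_congr rfl fun X hX => ?_
    rw [Finset.mem_filter, Finset.mem_powerset] at hX
    rw [← aux_fiber f S X hX.1]
    refine Finset.sum_congr ?_ fun _ _ => rfl
    ext E
    simp only [Finset.mem_filter]
    constructor
    · rintro ⟨⟨h, _⟩, h'⟩
      exact ⟨h, h'⟩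
    · rintro ⟨h, h'⟩
      exact ⟨⟨h, h' ▸ hX.2⟩, h'⟩
  · intro E hE
    rw [Finset.mem_filter, Finset.mem_powerset] at hE ⊢
    exact ⟨Finset.image_subset_image hE.1, hE.2⟩

theorem aux_finsum_s3 {α : Type*} [Finite α] [DecidableEq α] (S : Finset α) (Q : Set α → Prop)
    [DecidablePred fun E : Finset α => Q E] :
    ∑ᶠ E ∈ {E : Set α | E ⊆ S ∧ Q E}, (-1 : ℤ) ^ E.ncard
      = ∑ E ∈ S.powerset with Q (E : Finset α), (-1 : ℤ) ^ E.card := by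
  rw [← finsum_mem_coe_finset]
  symm
  refine finsum_mem_eq_of_bijOn (fun E : Finset α => (E : Set α)) ⟨?_, ?_, ?_⟩ ?_
  · intro E hE
    simpa using hE
  · exact Finset.coe_injective.injOn
  · intro E hE
    refine ⟨(Set.toFinite E).toFinset, ?_, by simp⟩
    obtain ⟨h1, h2⟩ := hE
    simp only [Finset.coe_filter, Set.mem_setOf_eq, Finset.mem_powerset, Set.Finite.coe_toFinset]
    exact ⟨by rw [← Finset.coe_subset]; simpa using h1, h2⟩
  · intro E _
    simp

/-- Proposition 4.2: `Σ_{E ∈ Ψ'(G,H)} (−1)^{|E|} = Σ_{X ∈ Ψ(G,H)} (−1)^{|X|}`. -/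
theorem sum_Psi'_eq_sum_Psi [Fintype F] [FiniteDimensional F V]
    (G H : Subgroup (V ≃ₗ[F] V)) (hHG : H ≤ G) :
    (∑ᶠ E ∈ Psi' G H, ((-1 : ℤ) ^ E.ncard)) = ∑ᶠ X ∈ Psi G H, ((-1 : ℤ) ^ X.ncard) := by
  classical
  haveI : Finite V := Module.finite_of_finite F
  haveI : Finite (V ≃ₗ[F] V) := Finite.of_injective (fun g => (g : V → V)) DFunLike.coe_injective
  haveI : Finite (Submodule F V) := Finite.of_injective (fun W => (W : Set V)) SetLike.coe_injective
  haveI : Finite (Subgroup (V ≃ₗ[F] V)) :=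
    Finite.of_injective (fun W => (W : Set (V ≃ₗ[F] V))) SetLike.coe_injective
  obtain ⟨S, hS⟩ : ∃ S : Finset (Submodule F V), (S : Set (Submodule F V)) = SStar H :=
    ⟨(Set.toFinite (SStar H)).toFinset, by simp⟩
  have hC : ((S.image (sstab G) : Finset _) : Set (Subgroup (V ≃ₗ[F] V))) = Cfam G H := by
    rw [Finset.coe_image, hS]
    ext M
    constructor
    · rintro ⟨W, ⟨h1, h2, h3⟩, rfl⟩
      exact ⟨W, h1, h2, fun g hg => ⟨hHG hg, h3 g hg⟩, rfl⟩
    · rintro ⟨W, h1, h2, h3, rfl⟩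
      exact ⟨W, ⟨h1, h2, fun g hg => (h3 hg).2⟩, rfl⟩
  have e1 : Psi' G H = {E | E ⊆ (S : Set (Submodule F V)) ∧ G ⊓ sInf (sstab G '' E) ≠ H} := by
    rw [hS]
    simp only [Psi', sInf_image]
  have e2 : Psi G H = {X | X ⊆ ((S.image (sstab G) : Finset _) : Set (Subgroup (V ≃ₗ[F] V))) ∧
      G ⊓ sInf X ≠ H} := by
    rw [hC]; rfl
  rw [e1, e2, aux_finsum_s3 S (fun E => G ⊓ sInf (sstab G '' E) ≠ H),
    aux_finsum_s3 (S.image (sstab G)) (fun X => G ⊓ sInf X ≠ H),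
    ← aux_finset (sstab G) S (fun X => G ⊓ sInf (X : Set (Subgroup (V ≃ₗ[F] V))) ≠ H)]
  simp only [Finset.coe_image]
end

section
/- Let V be a vector space of finite dimension over the finite field F_q, let G ≤ GL(V) be an irreducible subgroup, and let H ≤ G be a reducible subgroup. Then μ_{Î(G,H)}(H,G) = Σ_{Y∈Ψ(G,H)^∁} (−1)^{|Y|}. -/
variable {F V : Type*} [Field F] [AddCommGroup V] [Module F V]

theorem aux_alt {α : Type*} [Fintype α] (S : Set α)
    [∀ Y : Set α, Decidable (Y ⊆ S ∧ Y ≠ ∅)] (hS : S.Nonempty) :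
    ∑ Y : Set α, (if Y ⊆ S ∧ Y ≠ ∅ then (-1 : ℤ) ^ Y.ncard else 0) = -1 := by
  classical
  have h0 : ∑ Y : Set α, (if Y ⊆ S then (-1 : ℤ) ^ Y.ncard else 0) = 0 := by
    rw [← Equiv.sum_comp (Fintype.finsetEquivSet (α := α))]
    have := Finset.sum_powerset_neg_one_pow_card_of_nonempty (x := S.toFinset) (by simpa using hS)
    rw [← Finset.sum_filter]
    refine Eq.trans ?_ this
    apply Finset.sum_congr
    · ext Y
      rw [Finset.mem_filter, Finset.mem_powerset, Set.subset_toFinset]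
      simp
    · intro Y _
      simp [Set.ncard_coe_finset]
  have h1 : ∀ Y : Set α, (if Y ⊆ S ∧ Y ≠ ∅ then (-1 : ℤ) ^ Y.ncard else 0)
      = (if Y ⊆ S then (-1 : ℤ) ^ Y.ncard else 0) - (if Y = ∅ then 1 else 0) := by
    intro Y
    by_cases h : Y = ∅
    · subst h; simp
    · simp [h]
  rw [Finset.sum_congr rfl (fun Y _ => h1 Y), Finset.sum_sub_distrib, h0]
  simp

theorem aux_finsum_s4 {α : Type*} [Fintype α] (S : Set α) [DecidablePred (· ∈ S)] (f : α → ℤ) :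
    ∑ᶠ t ∈ S, f t = ∑ t, if t ∈ S then f t else 0 := by
  rw [finsum_eq_sum_of_fintype]
  apply Finset.sum_congr rfl
  intro t _
  rw [finsum_eq_if]

/-- Proposition 4.4: `μ_{Î(G,H)}(H,G) = Σ_{Y ∈ Ψ(G,H)^∁} (−1)^{|Y|}`. -/
theorem mobius_Ihat_eq_sum_PsiC [Fintype F] [FiniteDimensional F V]
    (G H : Subgroup (V ≃ₗ[F] V)) (hHG : H ≤ G) (hGirr : IsIrred G) (hHred : ¬IsIrred H)
    (mu : Subgroup (V ≃ₗ[F] V) → Subgroup (V ≃ₗ[F] V) → ℤ) (hmu : IsMobius (Ihat G H) mu) :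
    mu H G = ∑ᶠ Y ∈ PsiC G H, ((-1 : ℤ) ^ Y.ncard) := by
  classical
  have : Finite V := Module.finite_of_finite F
  have : Finite (V ≃ₗ[F] V) := Finite.of_injective (fun g => (g : V → V)) DFunLike.coe_injective
  have : Finite (Subgroup (V ≃ₗ[F] V)) := inferInstance
  let _ : Fintype (Subgroup (V ≃ₗ[F] V)) := Fintype.ofFinite _
  obtain ⟨hm0, hm1, hm2⟩ := hmu
  have hCG : ∀ M ∈ Cfam G H, M ≤ G := by
    rintro M ⟨W, -, -, -, rfl⟩ g hg
    exact hg.1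
  have hCH : ∀ M ∈ Cfam G H, H ≤ M := by
    rintro M ⟨W, -, -, h, rfl⟩
    exact h
  have hCne : ∀ M ∈ Cfam G H, ¬ G ≤ M := by
    rintro M ⟨W, h1, h2, -, rfl⟩ hle
    rcases hGirr W (fun g hg => (hle hg).2) with h | h
    · exact h1 h
    · exact h2 h
  have hHI : H ∈ redIdeal G H := by
    unfold IsIrred at hHred
    push Not at hHred
    obtain ⟨W, hW, h1, h2⟩ := hHred
    have : H ≤ sstab G W := fun g hg => ⟨hHG hg, hW g hg⟩
    exact ⟨sstab G W, ⟨W, h1, h2, this, rfl⟩, le_rfl, this⟩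
  have hGI : G ∉ redIdeal G H := by
    rintro ⟨M, hM, -, h⟩
    exact hCne M hM h
  have hHne : H ≠ G := fun h => hGI (h ▸ hHI)
  have hHhat : H ∈ Ihat G H := Or.inl hHI
  have hGhat : G ∈ Ihat G H := Or.inr (by simp)
  have hIle : ∀ t ∈ redIdeal G H, H ≤ t ∧ t ≤ G := by
    rintro t ⟨M, hM, h1, h2⟩
    exact ⟨h1, h2.trans (hCG M hM)⟩
  -- step 1
  have e1 : mu H G = - ∑ t, (if t ∈ redIdeal G H then mu H t else 0) := by
    have h := hm2 H hHhat G hGhat (lt_of_le_of_ne hHG hHne)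
    rw [aux_finsum_s4] at h
    have h2 : ∀ t, (if t ∈ {t | t ∈ Ihat G H ∧ H ≤ t ∧ t ≤ G} then mu H t else 0)
        = (if t ∈ redIdeal G H then mu H t else 0) + (if t = G then mu H t else 0) := by
      intro t
      by_cases hG : t = G
      · subst hG
        simp [hGhat, hHG, hGI]
      · by_cases hI : t ∈ redIdeal G H
        · have : t ∈ {t | t ∈ Ihat G H ∧ H ≤ t ∧ t ≤ G} := ⟨Or.inl hI, hIle t hI⟩
          simp only [this, hI, hG, if_true, if_false, add_zero]
        · have : t ∉ {t | t ∈ Ihat G H ∧ H ≤ t ∧ t ≤ G} := by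
            rintro ⟨h | h | h, -⟩
            · exact hI h
            · exact hI (h ▸ hHI)
            · exact hG h
          simp only [this, hI, hG, if_false, add_zero]
    rw [Finset.sum_congr rfl (fun t _ => h2 t), Finset.sum_add_distrib] at h
    simp only [Finset.sum_ite_eq', Finset.mem_univ, if_true] at h
    linarith
  -- step 2
  have e2 : ∀ t, -(if t ∈ redIdeal G H then mu H t else 0)
      = ∑ Y : Set (Subgroup (V ≃ₗ[F] V)), (if Y ⊆ Cfam G H ∧ Y ≠ ∅ then
          (-1 : ℤ) ^ Y.ncard * (if t ∈ {t | t ∈ Ihat G H ∧ H ≤ t ∧ t ≤ sInf Y} then mu H t else 0)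
          else 0) := by
    intro t
    have key : ∀ Y : Set (Subgroup (V ≃ₗ[F] V)), Y ⊆ Cfam G H → Y ≠ ∅ →
        (t ∈ {t | t ∈ Ihat G H ∧ H ≤ t ∧ t ≤ sInf Y} ↔
          t ∈ redIdeal G H ∧ Y ⊆ {M | M ∈ Cfam G H ∧ t ≤ M}) := by
      intro Y hY hne
      constructor
      · rintro ⟨-, h1, h2⟩
        obtain ⟨M, hM⟩ := Set.nonempty_iff_ne_empty.mpr hne
        exact ⟨⟨M, hY hM, h1, h2.trans (sInf_le hM)⟩, fun N hN => ⟨hY hN, h2.trans (sInf_le hN)⟩⟩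
      · rintro ⟨h1, h2⟩
        exact ⟨Or.inl h1, (hIle t h1).1, le_sInf fun N hN => (h2 hN).2⟩
    by_cases hI : t ∈ redIdeal G H
    · have hne : ({M | M ∈ Cfam G H ∧ t ≤ M}).Nonempty := by
        obtain ⟨M, hM, -, h⟩ := hI
        exact ⟨M, hM, h⟩
      have h := aux_alt _ hne
      rw [if_pos hI, ← neg_one_mul]
      refine (congrArg (· * mu H t) h.symm).trans ?_
      beta_reduce
      rw [Finset.sum_mul]
      apply Finset.sum_congr rfl
      intro Y _
      by_cases hY : Y ⊆ Cfam G H ∧ Y ≠ ∅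
      · rw [if_pos hY]
        simp only [key Y hY.1 hY.2, hI, true_and, hY.2, ne_eq, not_false_eq_true, and_true]
        split_ifs <;> simp
      · rw [if_neg hY, if_neg, zero_mul]
        rintro ⟨h1, h2⟩
        exact hY ⟨fun N hN => (h1 hN).1, h2⟩
    · rw [if_neg hI, neg_zero, eq_comm]
      apply Finset.sum_eq_zero
      intro Y _
      by_cases hY : Y ⊆ Cfam G H ∧ Y ≠ ∅
      · rw [if_pos hY, if_neg, mul_zero]
        intro h
        exact hI ((key Y hY.1 hY.2).1 h).1
      · rw [if_neg hY]
  rw [e1, ← Finset.sum_neg_distrib, Finset.sum_congr rfl (fun t _ => e2 t), Finset.sum_comm,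
    aux_finsum_s4]
  apply Finset.sum_congr rfl
  intro Y _
  by_cases hY : Y ⊆ Cfam G H ∧ Y ≠ ∅
  · simp only [if_pos hY]
    rw [← Finset.mul_sum, ← aux_finsum_s4]
    obtain ⟨M, hM⟩ := Set.nonempty_iff_ne_empty.mpr hY.2
    have hle : sInf Y ≤ G := (sInf_le hM).trans (hCG M (hY.1 hM))
    have hHle : H ≤ sInf Y := le_sInf fun N hN => hCH N (hY.1 hN)
    have hin : sInf Y ∈ Ihat G H := Or.inl ⟨M, hY.1 hM, hHle, sInf_le hM⟩
    have hinf : G ⊓ sInf Y = sInf Y := inf_eq_right.mpr hle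
    by_cases hE : sInf Y = H
    · have hP : Y ∈ PsiC G H := ⟨hY.1, hY.2, hinf.trans hE⟩
      have hs : {t | t ∈ Ihat G H ∧ H ≤ t ∧ t ≤ sInf Y} = {H} := by
        ext t
        simp only [Set.mem_ofPred_eq, Set.mem_singleton_iff, hE]
        constructor
        · rintro ⟨-, h1, h2⟩
          exact le_antisymm h2 h1
        · rintro rfl
          exact ⟨hHhat, le_rfl, le_rfl⟩
      rw [if_pos hP, hs, finsum_mem_singleton, hm1 H hHhat, mul_one]
    · have hP : Y ∉ PsiC G H := fun h => hE (hinf.symm.trans h.2.2)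
      rw [if_neg hP, hm2 H hHhat _ hin (lt_of_le_of_ne hHle (Ne.symm hE)), mul_zero]
  · have hP : Y ∉ PsiC G H := fun h => hY ⟨h.1, h.2.1⟩
    simp only [if_neg hY, if_neg hP, Finset.sum_const_zero]
end

section
/- Let V be a vector space of finite dimension over the finite field F_q, let G ≤ GL(V) be an irreducible subgroup, and let H be a proper subgroup of G. Then −μ_{Î(G,H)}(H,G) = Σ_{E∈Ψ'(G,H)} (−1)^{|E|} = Σ_{X∈Ψ(G,H)} (−1)^{|X|}. -/
variable {F V : Type*} [Field F] [AddCommGroup V] [Module F V]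

theorem abs_crosscut {L ι : Type*} [CompleteLattice L] [Finite L] [Finite ι]
    (A : Set ι) (f : ι → L) (G H : L) (hHG : H < G) (hfH : ∀ a ∈ A, H ≤ f a)
    (hfG : ∀ a ∈ A, f a ≤ G) (hG : ∀ a ∈ A, ¬ G ≤ f a) (S : Set L)
    (hS : ∀ K, K ∈ S ↔ (∃ a ∈ A, H ≤ K ∧ K ≤ f a) ∨ K = H ∨ K = G)
    (m : L → ℤ) (m1 : m H = 1)
    (m2 : ∀ y ∈ S, H < y → (∑ᶠ t ∈ {t | t ∈ S ∧ H ≤ t ∧ t ≤ y}, m t) = 0) :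
    -m G = ∑ᶠ E ∈ {E : Set ι | E ⊆ A ∧ G ⊓ ⨅ a ∈ E, f a ≠ H}, ((-1 : ℤ) ^ E.ncard) := by
  classical
  haveI := Fintype.ofFinite L
  haveI := Fintype.ofFinite ι
  let B : Finset ι := A.toFinset
  have hB : ∀ a, a ∈ B ↔ a ∈ A := fun a => by simp [B]
  let T : Finset L := S.toFinset
  have hT : ∀ K, K ∈ T ↔ K ∈ S := fun a => by simp [T]
  let g : Finset ι → L := fun E => G ⊓ ⨅ a ∈ E, f a
  have hrhs : (∑ᶠ E ∈ {E : Set ι | E ⊆ A ∧ G ⊓ ⨅ a ∈ E, f a ≠ H}, ((-1 : ℤ) ^ E.ncard))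
      = ∑ E ∈ B.powerset with g E ≠ H, (-1 : ℤ) ^ E.card := by
    rw [← finsum_mem_coe_finset]
    symm
    apply finsum_mem_eq_of_bijOn (fun E : Finset ι => (E : Set ι))
    · refine ⟨?_, fun x _ y _ h => Finset.coe_injective h, ?_⟩
      · intro E hE
        simp only [Finset.coe_filter, Finset.mem_powerset, Set.mem_setOf_eq] at hE ⊢
        exact ⟨fun a ha => (hB a).1 (hE.1 ha), by simpa [g] using hE.2⟩
      · intro E hE
        refine ⟨E.toFinset, ?_, by simp⟩
        simp only [Finset.coe_filter, Finset.mem_powerset, Set.mem_setOf_eq] at hE ⊢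
        exact ⟨fun a ha => (hB a).2 (hE.1 (by simpa using ha)), by simpa [g] using hE.2⟩
    · intro E _
      simp
  rw [hrhs]
  have m2' : ∀ y ∈ S, H ≤ y → ∑ t ∈ T with H ≤ t ∧ t ≤ y, m t = if y = H then 1 else 0 := by
    intro y hy hle
    split_ifs with h
    · subst h
      rw [show ({t ∈ T | y ≤ t ∧ t ≤ y} : Finset L) = {y} from ?_]
      · simpa using m1
      · ext t
        simp only [Finset.mem_filter, hT, Finset.mem_singleton]
        exact ⟨fun h => le_antisymm h.2.2 h.2.1, by rintro rfl; exact ⟨hy, le_rfl, le_rfl⟩⟩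
    · rw [← m2 y hy (lt_of_le_of_ne hle (Ne.symm h)), ← finsum_mem_coe_finset]
      congr 1
      ext t
      simp [hT]
  have hGS : G ∈ S := (hS G).2 (Or.inr (Or.inr rfl))
  have hHT : ∀ K ∈ S, H ≤ K := by
    intro K hK
    rcases (hS K).1 hK with ⟨a, _, h, _⟩ | h | h
    · exact h
    · exact h.ge
    · exact h ▸ hHG.le
  rcases B.eq_empty_or_nonempty with hBe | hBn
  · have hA : ∀ a, a ∉ A := fun a ha => by have := (hB a).2 ha; simp [hBe] at this
    have h1 := m2' G hGS hHG.le
    rw [if_neg hHG.ne', show ({t ∈ T | H ≤ t ∧ t ≤ G} : Finset L) = {H, G} from ?_,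
      Finset.sum_pair hHG.ne, m1] at h1
    · rw [hBe, Finset.powerset_empty, Finset.filter_singleton, if_pos (by simpa [g] using hHG.ne')]
      simp
      linarith
    · ext t
      simp only [Finset.mem_filter, hT, hS, Finset.mem_insert, Finset.mem_singleton]
      constructor
      · rintro ⟨⟨a, ha, _⟩ | h, _⟩
        · exact absurd ha (hA a)
        · exact h
      · rintro (rfl | rfl)
        · exact ⟨by simp, le_rfl, hHG.le⟩
        · exact ⟨by simp, hHG.le, le_rfl⟩
  · have hgS : ∀ E ∈ B.powerset, g E ∈ S ∧ H ≤ g E := by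
      intro E hE
      have hE' : ∀ a ∈ E, a ∈ A := fun a ha => (hB a).1 (Finset.mem_powerset.1 hE ha)
      have hle : H ≤ g E := le_inf hHG.le (le_iInf₂ fun a ha => hfH a (hE' a ha))
      refine ⟨?_, hle⟩
      rcases E.eq_empty_or_nonempty with rfl | ⟨a, ha⟩
      · simpa [g] using hGS
      · exact (hS _).2 (Or.inl ⟨a, hE' a ha, hle, inf_le_right.trans (iInf₂_le a ha)⟩)
    have key : ∑ E ∈ B.powerset, (-1 : ℤ) ^ E.card * ∑ t ∈ T with H ≤ t ∧ t ≤ g E, m t = m G := by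
      have : ∀ E ∈ B.powerset, (-1 : ℤ) ^ E.card * ∑ t ∈ T with H ≤ t ∧ t ≤ g E, m t
          = ∑ t ∈ T, if t ≤ g E then (-1 : ℤ) ^ E.card * m t else 0 := by
        intro E _
        rw [Finset.mul_sum, ← Finset.sum_filter]
        refine Finset.sum_congr ?_ fun _ _ => rfl
        ext t
        simp only [Finset.mem_filter, hT]
        exact ⟨fun h => ⟨h.1, h.2.2⟩, fun h => ⟨h.1, hHT t h.1, h.2⟩⟩
      rw [Finset.sum_congr rfl this, Finset.sum_comm]
      have h2 : ∀ t ∈ T, (∑ E ∈ B.powerset, if t ≤ g E then (-1 : ℤ) ^ E.card * m t else 0)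
          = if t = G then m t else 0 := by
        intro t ht
        have htS := (hT t).1 ht
        have htG : t ≤ G := by
          rcases (hS t).1 htS with ⟨a, ha, _, h⟩ | h | h
          · exact h.trans (hfG a ha)
          · exact h ▸ hHG.le
          · exact h.le
        rw [← Finset.sum_filter, ← Finset.sum_mul,
          show ({E ∈ B.powerset | t ≤ g E} : Finset (Finset ι)) = ({a ∈ B | t ≤ f a} : Finset ι).powerset from ?_,
          Finset.sum_powerset_neg_one_pow_card]
        · have : (({a ∈ B | t ≤ f a} : Finset ι) = ∅) ↔ t = G := by
            rw [Finset.filter_eq_empty_iff]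
            constructor
            · intro h
              rcases (hS t).1 htS with ⟨a, ha, _, h'⟩ | h' | h'
              · exact absurd h' (h ((hB a).2 ha))
              · obtain ⟨a, ha⟩ := hBn
                exact absurd (h' ▸ hfH a ((hB a).1 ha)) (h ha)
              · exact h'
            · rintro rfl a ha
              exact hG a ((hB a).1 ha)
          simp [this]
        · ext E
          simp only [Finset.mem_filter, Finset.mem_powerset, g, le_inf_iff, le_iInf_iff,
            Finset.subset_iff]
          exact ⟨fun h a ha => ⟨h.1 ha, h.2.2 a ha⟩,
            fun h => ⟨fun a ha => (h ha).1, htG, fun a ha => (h ha).2⟩⟩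
      rw [Finset.sum_congr rfl h2, Finset.sum_ite_eq' T G, if_pos ((hT G).2 hGS)]
    have key2 : ∑ E ∈ B.powerset with g E = H, (-1 : ℤ) ^ E.card = m G := by
      rw [← key, Finset.sum_filter]
      refine Finset.sum_congr rfl fun E hE => ?_
      rw [m2' _ (hgS E hE).1 (hgS E hE).2]
      simp
    have h3 := Finset.sum_filter_add_sum_filter_not B.powerset (fun E => g E = H)
      (fun E => (-1 : ℤ) ^ E.card)
    rw [key2, Finset.sum_powerset_neg_one_pow_card, if_neg hBn.ne_empty] at h3
    simp only [ne_eq]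
    linarith

theorem mem_sstab_iff' (G H : Subgroup (V ≃ₗ[F] V)) (hHG : H ≤ G) (W : Submodule F V) :
    H ≤ sstab G W ↔ ∀ g ∈ H, Submodule.map ((g : V ≃ₗ[F] V) : V →ₗ[F] V) W = W :=
  ⟨fun h g hg => (h hg).2, fun h g hg => ⟨hHG hg, h g hg⟩⟩

/-- Theorem 4.5 (first part): `−μ_{Î(G,H)}(H,G) = Σ_{E ∈ Ψ'(G,H)} (−1)^{|E|}
= Σ_{X ∈ Ψ(G,H)} (−1)^{|X|}`. -/
theorem neg_mobius_Ihat_eq_sums [Fintype F] [FiniteDimensional F V]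
    (G H : Subgroup (V ≃ₗ[F] V)) (hHG : H < G) (hGirr : IsIrred G)
    (mu : Subgroup (V ≃ₗ[F] V) → Subgroup (V ≃ₗ[F] V) → ℤ) (hmu : IsMobius (Ihat G H) mu) :
    -mu H G = (∑ᶠ E ∈ Psi' G H, ((-1 : ℤ) ^ E.ncard)) ∧
    -mu H G = (∑ᶠ X ∈ Psi G H, ((-1 : ℤ) ^ X.ncard)) := by
  haveI : Finite V := Module.finite_of_finite F
  haveI : Finite (V ≃ₗ[F] V) := DFunLike.finite _
  haveI : Finite (Submodule F V) := inferInstance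
  haveI : Finite (Subgroup (V ≃ₗ[F] V)) := inferInstance
  have hle : ∀ W, sstab G W ≤ G := fun W g hg => hg.1
  have hnot : ∀ W, W ≠ ⊥ → W ≠ ⊤ → ¬ G ≤ sstab G W := by
    intro W h0 h1 h
    rcases hGirr W ((mem_sstab_iff' G G le_rfl W).1 h) with h | h
    · exact h0 h
    · exact h1 h
  have hHS : H ∈ Ihat G H := Or.inr (Or.inl rfl)
  constructor
  · refine abs_crosscut (SStar H) (sstab G) G H hHG
      (fun W hW => (mem_sstab_iff' G H hHG.le W).2 hW.2.2) (fun W _ => hle W)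
      (fun W hW => hnot W hW.1 hW.2.1) (Ihat G H) ?_ (mu H) (hmu.2.1 H hHS) (hmu.2.2 H hHS)
    intro K
    refine or_congr ?_ Iff.rfl
    constructor
    · rintro ⟨M, ⟨W, h0, h1, h2, rfl⟩, h3⟩
      exact ⟨W, ⟨h0, h1, (mem_sstab_iff' G H hHG.le W).1 h2⟩, h3⟩
    · rintro ⟨W, ⟨h0, h1, h2⟩, h3⟩
      exact ⟨_, ⟨W, h0, h1, (mem_sstab_iff' G H hHG.le W).2 h2, rfl⟩, h3⟩
  · have := abs_crosscut (Cfam G H) id G H hHG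
      (by rintro M ⟨W, h0, h1, h2, rfl⟩; exact h2)
      (by rintro M ⟨W, h0, h1, h2, rfl⟩; exact hle W)
      (by rintro M ⟨W, h0, h1, h2, rfl⟩; exact hnot W h0 h1)
      (Ihat G H) (fun K => Iff.rfl) (mu H) (hmu.2.1 H hHS) (hmu.2.2 H hHS)
    simpa only [Psi, sInf_eq_iInf, id] using this
end

section
/- Let V be a vector space of finite dimension over the finite field F_q, let G ≤ GL(V) be an irreducible subgroup, and let H be a proper subgroup of G. Then μ_{Î(G,H)}(H,G) = χ̃(Δ1), where Δ1 is the simplicial complex whose set of faces is Ψ'(G,H); explicitly, μ_{Î(G,H)}(H,G) = (Σ_{i≥0} (−1)^i F_i) − 1, where F_i is the number of sets E ∈ Ψ'(G,H) with |E| = i+1. -/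
variable {F V : Type*} [Field F] [AddCommGroup V] [Module F V]

/-- Theorem 4.5: `μ_{Î(G,H)}(H,G) = χ̃(Δ₁)`, where `Δ₁` is the simplicial complex whose
faces are the elements of `Ψ'(G,H)`, and the reduced Euler characteristic is
`(Σ_{i ≥ 0} (−1)^i F_i) − 1` with `F_i` the number of faces of cardinality `i + 1`. -/
theorem mobius_Ihat_eq_reduced_euler_Delta1 [Fintype F] [FiniteDimensional F V]
    (G H : Subgroup (V ≃ₗ[F] V)) (hHG : H < G) (hGirr : IsIrred G)
    (mu : Subgroup (V ≃ₗ[F] V) → Subgroup (V ≃ₗ[F] V) → ℤ) (hmu : IsMobius (Ihat G H) mu) :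
    mu H G =
      (∑ᶠ i : ℕ, (-1 : ℤ) ^ i * ({E | E ∈ Psi' G H ∧ E.ncard = i + 1}.ncard : ℤ)) - 1 := by
  classical
  haveI : Finite V := Module.finite_of_finite F
  haveI : Finite (V ≃ₗ[F] V) := Finite.of_injective (fun e : V ≃ₗ[F] V => (e : V → V))
    (fun a b h => LinearEquiv.ext (fun x => congrFun h x))
  haveI : Finite (Submodule F V) := Finite.of_injective (fun W : Submodule F V => (W : Set V))
    SetLike.coe_injective
  haveI : Finite (Subgroup (V ≃ₗ[F] V)) :=
    Finite.of_injective (fun W : Subgroup (V ≃ₗ[F] V) => (W : Set (V ≃ₗ[F] V)))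
      SetLike.coe_injective
  letI := Fintype.ofFinite (Submodule F V)
  letI := Fintype.ofFinite (Subgroup (V ≃ₗ[F] V))
  obtain ⟨-, hm1, hm2⟩ := hmu
  have hHI : H ∈ Ihat G H := Or.inr (Or.inl rfl)
  have hGI : G ∈ Ihat G H := Or.inr (Or.inr rfl)
  have hstabG : ∀ W, sstab G W ≤ G := fun W g hg => hg.1
  have hle : ∀ K, K ≤ G → ∀ W, (K ≤ sstab G W ↔
      ∀ g ∈ K, Submodule.map ((g : V ≃ₗ[F] V) : V →ₗ[F] V) W = W) := fun K hK W =>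
    ⟨fun h g hg => (h hg).2, fun h g hg => ⟨hK hg, h g hg⟩⟩
  have hIle : ∀ t ∈ Ihat G H, H ≤ t ∧ t ≤ G := by
    rintro t (⟨M, ⟨W, -, -, -, rfl⟩, h1, h2⟩ | rfl | rfl)
    · exact ⟨h1, h2.trans (hstabG W)⟩
    · exact ⟨le_rfl, hHG.le⟩
    · exact ⟨hHG.le, le_rfl⟩
  set S : Finset (Subgroup (V ≃ₗ[F] V)) := Finset.univ.filter (fun t => t ∈ Ihat G H) with hS
  set T : Finset (Submodule F V) := Finset.univ.filter (fun W => W ∈ SStar H) with hT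
  let φ : Finset (Submodule F V) → Subgroup (V ≃ₗ[F] V) := fun E => G ⊓ ⨅ W ∈ E, sstab G W
  have hφle : ∀ K, K ≤ G → ∀ E, (K ≤ φ E ↔ ∀ W ∈ E, K ≤ sstab G W) := by
    intro K hK E
    simp only [φ, le_inf_iff, le_iInf_iff]
    exact ⟨fun h => h.2, fun h => ⟨hK, h⟩⟩
  have hTmem : ∀ W, W ∈ T ↔ W ∈ SStar H := by simp [hT]
  have hSmem : ∀ W, W ∈ S ↔ W ∈ Ihat G H := by simp [hS]
  have hHφ : ∀ E ∈ T.powerset, H ≤ φ E := by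
    intro E hE
    rw [Finset.mem_powerset] at hE
    rw [hφle H hHG.le]
    intro W hW
    exact (hle H hHG.le W).2 ((hTmem W).1 (hE hW)).2.2
  have hφI : ∀ E ∈ T.powerset, φ E ∈ Ihat G H := by
    intro E hE
    have hH := hHφ E hE
    rw [Finset.mem_powerset] at hE
    rcases E.eq_empty_or_nonempty with rfl | ⟨W, hW⟩
    · have : φ ∅ = G := by simp [φ]
      rw [this]; exact hGI
    · have hWT := (hTmem W).1 (hE hW)
      refine Or.inl ⟨sstab G W, ⟨W, hWT.1, hWT.2.1, (hle H hHG.le W).2 hWT.2.2, rfl⟩, hH, ?_⟩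
      exact inf_le_right.trans (iInf₂_le W hW)
  -- Moebius sums
  have hsum : ∀ K ∈ Ihat G H, (∑ t ∈ S with t ≤ K, mu H t) = if K = H then 1 else 0 := by
    intro K hK
    split_ifs with h
    · subst h
      have : (S.filter (fun t => t ≤ K)) = {K} := by
        ext t
        simp only [Finset.mem_filter, hSmem, Finset.mem_singleton]
        constructor
        · rintro ⟨h1, h2⟩; exact le_antisymm h2 (hIle t h1).1
        · rintro rfl; exact ⟨hK, le_rfl⟩
      rw [this, Finset.sum_singleton, hm1 K hK]
    · have := hm2 H hHI K hK (lt_of_le_of_ne (hIle K hK).1 (Ne.symm h))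
      rw [← this, ← finsum_mem_coe_finset]
      congr 1
      ext t
      congr 1
      · simp only [Finset.coe_filter, hSmem, Set.mem_setOf_eq, eq_iff_iff]
        exact ⟨fun h => ⟨h.1, (hIle t h.1).1, h.2⟩, fun h => ⟨h.1, h.2.2⟩⟩
      · apply Function.hfunext
        · simp only [Finset.coe_filter, hSmem, Set.mem_setOf_eq, eq_iff_iff]
          exact ⟨fun h => ⟨h.1, (hIle t h.1).1, h.2⟩, fun h => ⟨h.1, h.2.2⟩⟩
        · intros; rfl
  have key : (∑ E ∈ T.powerset, (-1 : ℤ) ^ E.card * (if φ E = H then 1 else 0))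
      = mu H G + if T = ∅ then 1 else 0 := by
    have e1 : (∑ E ∈ T.powerset, (-1 : ℤ) ^ E.card * (if φ E = H then 1 else 0))
        = ∑ E ∈ T.powerset, ∑ t ∈ S, if t ≤ φ E then (-1 : ℤ) ^ E.card * mu H t else 0 := by
      refine Finset.sum_congr rfl fun E hE => ?_
      rw [← hsum _ (hφI E hE), Finset.mul_sum, Finset.sum_filter]
    rw [e1, Finset.sum_comm]
    have e2 : ∀ t ∈ S, (∑ E ∈ T.powerset, if t ≤ φ E then (-1 : ℤ) ^ E.card * mu H t else 0)
        = (if t = G then mu H G else 0) + (if t = H then (if T = ∅ then 1 else 0) else 0) := by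
      intro t ht
      rw [hSmem] at ht
      have htG := (hIle t ht).2
      have e3 : T.powerset.filter (fun E => t ≤ φ E) =
          (T.filter (fun W => t ≤ sstab G W)).powerset := by
        ext E
        simp only [Finset.mem_filter, Finset.mem_powerset, hφle t htG]
        exact ⟨fun h W hW => Finset.mem_filter.2 ⟨h.1 hW, h.2 W hW⟩,
          fun h => ⟨fun W hW => (Finset.mem_filter.1 (h hW)).1,
            fun W hW => (Finset.mem_filter.1 (h hW)).2⟩⟩
      rw [← Finset.sum_filter, e3, ← Finset.sum_mul, Finset.sum_powerset_neg_one_pow_card]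
      by_cases hG : t = G
      · subst hG
        have : T.filter (fun W => t ≤ sstab t W) = ∅ := by
          rw [Finset.filter_eq_empty_iff]
          intro W hW h
          have hWT := (hTmem W).1 hW
          rcases hGirr W ((hle t le_rfl W).1 h) with h | h
          · exact hWT.1 h
          · exact hWT.2.1 h
        rw [if_pos this, if_pos rfl, if_neg hHG.ne']
        ring
      · rw [if_neg hG]
        by_cases hH : t = H
        · subst hH
          have : T.filter (fun W => t ≤ sstab G W) = T := by
            rw [Finset.filter_eq_self]
            intro W hW
            exact (hle t htG W).2 ((hTmem W).1 hW).2.2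
          rw [this, if_pos rfl, hm1 t ht]; ring
        · rw [if_neg hH]
          rcases ht with ⟨M, ⟨W, h1, h2, h3, rfl⟩, h4, h5⟩ | h | h
          · have : T.filter (fun W => t ≤ sstab G W) ≠ ∅ := by
              refine Finset.ne_empty_of_mem (a := W) ?_
              rw [Finset.mem_filter, hTmem]
              exact ⟨⟨h1, h2, (hle H hHG.le W).1 h3⟩, h5⟩
            rw [if_neg this]; ring
          · exact absurd h hH
          · exact absurd h hG
    rw [Finset.sum_congr rfl e2, Finset.sum_add_distrib, Finset.sum_ite_eq', Finset.sum_ite_eq',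
      if_pos ((hSmem G).2 hGI), if_pos ((hSmem H).2 hHI)]
  have tot := Finset.sum_powerset_neg_one_pow_card (x := T)
  have hmuG : mu H G = - ∑ E ∈ T.powerset with φ E ≠ H, (-1 : ℤ) ^ E.card := by
    have : (∑ E ∈ T.powerset, (-1 : ℤ) ^ E.card * (if φ E = H then 1 else 0))
        + ∑ E ∈ T.powerset with φ E ≠ H, (-1 : ℤ) ^ E.card
        = ∑ E ∈ T.powerset, (-1 : ℤ) ^ E.card := by
      rw [Finset.sum_filter, ← Finset.sum_add_distrib]
      refine Finset.sum_congr rfl fun E _ => ?_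
      by_cases h : φ E = H <;> simp [h]
    rw [key, tot] at this
    linarith
  set Q := T.powerset.filter (fun E => φ E ≠ H) with hQ
  have hempty : ∅ ∈ Q := by
    rw [hQ, Finset.mem_filter]
    refine ⟨Finset.empty_mem_powerset _, ?_⟩
    have : φ ∅ = G := by simp [φ]
    rw [this]; exact hHG.ne'
  have hcard : ∀ i : ℕ, {E | E ∈ Psi' G H ∧ E.ncard = i + 1}.ncard
      = ((Q.erase ∅).filter (fun E => E.card - 1 = i)).card := by
    intro i
    rw [← Set.ncard_coe_finset]
    symm
    refine Set.ncard_congr (fun (E : Finset (Submodule F V)) _ => (E : Set (Submodule F V))) ?_ ?_ ?_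
    · intro E hE
      rw [Finset.mem_coe, Finset.mem_filter, Finset.mem_erase, hQ, Finset.mem_filter,
        Finset.mem_powerset] at hE
      obtain ⟨⟨h1, h2, h3⟩, h4⟩ := hE
      have := Finset.card_pos.2 (Finset.nonempty_iff_ne_empty.2 h1)
      refine ⟨⟨fun W hW => (hTmem W).1 (h2 hW), ?_⟩, ?_⟩
      · simpa [φ] using h3
      · rw [Set.ncard_coe_finset]; omega
    · intro a b _ _ h
      exact Finset.coe_injective h
    · intro E hE
      obtain ⟨⟨h1, h2⟩, h3⟩ := hE
      have hfin : E.Finite := Set.toFinite E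
      refine ⟨hfin.toFinset, ?_, hfin.coe_toFinset⟩
      rw [Set.ncard_eq_toFinset_card E hfin] at h3
      rw [Finset.mem_coe, Finset.mem_filter, Finset.mem_erase, hQ, Finset.mem_filter,
        Finset.mem_powerset]
      refine ⟨⟨?_, ?_, ?_⟩, by omega⟩
      · intro h; rw [h] at h3; simp at h3
      · intro W hW; exact (hTmem W).2 (h1 (hfin.mem_toFinset.1 hW))
      · simpa [φ] using h2
  have hfs : (∑ᶠ i : ℕ, (-1 : ℤ) ^ i * ({E | E ∈ Psi' G H ∧ E.ncard = i + 1}.ncard : ℤ))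
      = ∑ E ∈ Q.erase ∅, - (-1 : ℤ) ^ E.card := by
    simp only [hcard]
    have hmaps : ∀ E ∈ Q.erase ∅, E.card - 1 ∈ Finset.range (T.card + 1) := by
      intro E hE
      rw [Finset.mem_erase, hQ, Finset.mem_filter, Finset.mem_powerset] at hE
      have := Finset.card_le_card hE.2.1
      rw [Finset.mem_range]; omega
    rw [finsum_eq_sum_of_support_subset (s := Finset.range (T.card + 1)),
      ← Finset.sum_fiberwise_of_maps_to hmaps]
    · refine Finset.sum_congr rfl fun i _ => ?_
      rw [mul_comm, ← nsmul_eq_mul, ← Finset.sum_const]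
      refine Finset.sum_congr rfl fun E hE => ?_
      rw [Finset.mem_filter, Finset.mem_erase] at hE
      have := Finset.card_pos.2 (Finset.nonempty_iff_ne_empty.2 hE.1.1)
      have h2 : E.card = i + 1 := by omega
      rw [h2, pow_succ]; ring
    · intro i hi
      rw [Function.mem_support] at hi
      by_contra hn
      apply hi
      have : (Q.erase ∅).filter (fun E => E.card - 1 = i) = ∅ := by
        rw [Finset.filter_eq_empty_iff]
        rintro E hE rfl
        exact hn (hmaps E hE)
      rw [this]; simp
  rw [hfs, hmuG, ← Finset.add_sum_erase Q _ hempty, Finset.sum_neg_distrib]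
  simp
  ring
end

section
/- Let V be a vector space of finite dimension over the finite field F_q, let G ≤ GL(V) be an irreducible subgroup, and let H ≤ G be a reducible subgroup. Then the poset Î(G,H), ordered by inclusion, is a lattice: (i) for all K1, K2 ∈ Î(G,H), the intersection K1 ∩ K2 belongs to Î(G,H) and is the meet of K1 and K2 in Î(G,H); (ii) for all K1, K2 ∈ Î(G,H), the set {K ∈ Î(G,H) : K1 ≤ K and K2 ≤ K} has a least element. -/
variable {F V : Type*} [Field F] [AddCommGroup V] [Module F V]

/-- `Î(G,H)` is a lattice: intersections of elements stay in `Î(G,H)` and give meets, and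
any two elements have a least upper bound in `Î(G,H)`. -/
theorem Ihat_isLattice [Fintype F] [FiniteDimensional F V]
    (G H : Subgroup (V ≃ₗ[F] V)) (hHG : H ≤ G) (hGirr : IsIrred G) (hHred : ¬IsIrred H) :
    (∀ K₁ ∈ Ihat G H, ∀ K₂ ∈ Ihat G H,
      K₁ ⊓ K₂ ∈ Ihat G H ∧ K₁ ⊓ K₂ ≤ K₁ ∧ K₁ ⊓ K₂ ≤ K₂ ∧
        ∀ K ∈ Ihat G H, K ≤ K₁ → K ≤ K₂ → K ≤ K₁ ⊓ K₂) ∧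
    (∀ K₁ ∈ Ihat G H, ∀ K₂ ∈ Ihat G H, ∃ J ∈ Ihat G H, K₁ ≤ J ∧ K₂ ≤ J ∧
      ∀ K ∈ Ihat G H, K₁ ≤ K → K₂ ≤ K → J ≤ K) := by
  have hle : ∀ K ∈ Ihat G H, H ≤ K ∧ K ≤ G := by
    rintro K (⟨M, ⟨W, _, _, _, rfl⟩, h1, h2⟩ | rfl | rfl)
    · exact ⟨h1, h2.trans fun g hg => hg.1⟩
    · exact ⟨le_rfl, hHG⟩
    · exact ⟨hHG, le_rfl⟩
  have hdown : ∀ K ∈ Ihat G H, K ≠ G → ∀ L, H ≤ L → L ≤ K → L ∈ Ihat G H := by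
    rintro K (⟨M, hM, h1, h2⟩ | rfl | rfl) hK L hL hLK
    · exact Or.inl ⟨M, hM, hL, hLK.trans h2⟩
    · exact Or.inr (Or.inl (le_antisymm hLK hL))
    · exact absurd rfl hK
  refine ⟨fun K₁ h₁ K₂ h₂ => ⟨?_, inf_le_left, inf_le_right, fun K _ a b => le_inf a b⟩,
    fun K₁ h₁ K₂ h₂ => ?_⟩
  · by_cases hK : K₁ = G
    · rw [hK, inf_eq_right.2 (hle K₂ h₂).2]
      exact h₂
    · exact hdown K₁ h₁ hK _ (le_inf (hle K₁ h₁).1 (hle K₂ h₂).1) inf_le_left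
  · by_cases hJ : K₁ ⊔ K₂ ∈ Ihat G H
    · exact ⟨_, hJ, le_sup_left, le_sup_right, fun K _ a b => sup_le a b⟩
    · refine ⟨G, Or.inr (Or.inr rfl), (hle K₁ h₁).2, (hle K₂ h₂).2, fun K hK a b => ?_⟩
      by_cases hKG : K = G
      · exact hKG.ge
      · exact absurd (hdown K hK hKG _ ((hle K₁ h₁).1.trans le_sup_left) (sup_le a b)) hJ
end

section
/- Let p be an odd prime, let n be a prime number, and let V = F_p^n with standard basis e_1, …, e_n. Let G = GL(n,p) be the full general linear group acting on V, and let H ≤ G be the subgroup of all linear automorphisms that fix each of e_{m+1}, …, e_n and map the span ⟨e_1, …, e_m⟩ to itself (so H acts as the full group GL(m,p) on ⟨e_1, …, e_m⟩ and as the identity on ⟨e_{m+1}, …, e_n⟩), where 1 ≤ m < n. If n − m + 1 is prime, then μ_{Î(G,H)}(H,G) = 0. -/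
variable {F V : Type*} [Field F] [AddCommGroup V] [Module F V]

theorem weisner_aux {α : Type*} [Lattice α] [Finite α] (S : Set α) (f : α → ℤ) (h z : α)
    (hS : ∀ x ∈ S, x ⊔ z ∈ S) (hmin : ∀ x ∈ S, h ≤ x) (hz : ¬ z ≤ h)
    (hf : ∀ y ∈ S, h < y → (∑ᶠ t ∈ {t | t ∈ S ∧ h ≤ t ∧ t ≤ y}, f t) = 0) :
    ∀ y ∈ S, z ≤ y → (∑ᶠ t ∈ {t | t ∈ S ∧ t ⊔ z = y}, f t) = 0 := by
  classical
  have := Fintype.ofFinite α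
  have conv : ∀ P : α → Prop, (∑ᶠ t ∈ {t | P t}, f t) = ∑ t ∈ Finset.univ.filter P, f t := by
    intro P
    rw [← finsum_mem_coe_finset]
    simp
  intro y
  induction y using WellFoundedLT.induction with
  | ind y ih =>
  intro hy hzy
  have hlt : h < y := lt_of_le_of_ne (hmin y hy) (by rintro rfl; exact hz hzy)
  have h0 := hf y hy hlt
  rw [conv] at h0
  rw [← Finset.sum_fiberwise_of_maps_to (t := Finset.univ.filter (fun w => w ∈ S ∧ z ≤ w ∧ w ≤ y))
    (g := fun t => t ⊔ z)] at h0
  · rw [Finset.sum_eq_single y] at h0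
    · rw [conv, ← h0]
      apply Finset.sum_congr _ (fun _ _ => rfl)
      ext t
      simp only [Finset.mem_filter, Finset.mem_univ, true_and]
      constructor
      · rintro ⟨a, rfl⟩
        exact ⟨⟨a, hmin _ a, le_sup_left⟩, rfl⟩
      · rintro ⟨⟨a, _, _⟩, b⟩
        exact ⟨a, b⟩
    · intro w hw hne
      simp only [Finset.mem_filter, Finset.mem_univ, true_and] at hw
      have := ih w (lt_of_le_of_ne hw.2.2 hne) hw.1 hw.2.1
      rw [conv] at this
      rw [← this]
      apply Finset.sum_congr _ (fun _ _ => rfl)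
      ext t
      simp only [Finset.mem_filter, Finset.mem_univ, true_and]
      constructor
      · rintro ⟨⟨a, _, _⟩, b⟩
        exact ⟨a, b⟩
      · rintro ⟨a, rfl⟩
        exact ⟨⟨a, hmin _ a, le_sup_left.trans hw.2.2⟩, rfl⟩
    · intro hn
      simp [hy, hzy] at hn
  · intro t ht
    simp only [Finset.mem_filter, Finset.mem_univ, true_and] at ht ⊢
    exact ⟨hS t ht.1, le_sup_right, sup_le ht.2.2 hzy⟩

theorem neg_mem_sstab_aux {F V : Type*} [Field F] [AddCommGroup V] [Module F V]
    (U : Submodule F V) : LinearEquiv.neg F ∈ sstab (⊤ : Subgroup (V ≃ₗ[F] V)) U := by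
  refine ⟨trivial, ?_⟩
  ext x
  constructor
  · rintro ⟨y, hy, rfl⟩
    simpa using hy
  · intro hx
    exact ⟨-x, U.neg_mem hx, by simp⟩

theorem top_not_le_sstab_aux {F V : Type*} [Field F] [AddCommGroup V] [Module F V]
    (U : Submodule F V) (h1 : U ≠ ⊥) (h2 : U ≠ ⊤) :
    ¬ (⊤ : Subgroup (V ≃ₗ[F] V)) ≤ sstab ⊤ U := by
  intro hle
  obtain ⟨v, hv, hv0⟩ := U.exists_mem_ne_zero_of_ne_bot h1
  obtain ⟨u, -, hu⟩ := SetLike.exists_of_lt (lt_top_iff_ne_top.2 h2)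
  obtain ⟨f, hf, hfu⟩ : ∃ f : V →ₗ[F] F, f v ≠ 0 ∧ f (u - v) = 0 := by
    have hns : v ∉ Submodule.span F {u - v} := by
      intro hm
      obtain ⟨c, hc⟩ := Submodule.mem_span_singleton.1 hm
      by_cases hc0 : c = 0
      · subst hc0; simp at hc; exact hv0 hc.symm
      · apply hu
        have : u - v = c⁻¹ • v := by
          rw [eq_inv_smul_iff₀ hc0, hc]
        rw [sub_eq_iff_eq_add.1 this]
        exact U.add_mem (U.smul_mem _ hv) hv
    obtain ⟨f, hf, hf2⟩ := Submodule.exists_le_ker_of_notMem hns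
    exact ⟨f, hf, hf2 (Submodule.mem_span_singleton_self _)⟩
  let e : V ≃ₗ[F] V := LinearEquiv.transvection hfu
  have hmem := (hle (show e ∈ ⊤ from trivial)).2
  have : e v ∈ U := by
    rw [← hmem]; exact ⟨v, hv, rfl⟩
  have hev : e v = v + f v • (u - v) := rfl
  rw [hev] at this
  apply hu
  have h3 : f v • (u - v) ∈ U := (U.add_mem_iff_right hv).1 this
  have h4 := (U.smul_mem_iff hf).1 h3
  exact (U.sub_mem_iff_left hv).1 h4

/-- Theorem 5.1: for `G = GL(n,p)` with `p` an odd prime and `n` prime, and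
`H = GL(m,p) ⊕ I_{n−m}` the subgroup fixing the last `n − m` standard basis vectors and
stabilizing the span of the first `m`, if `n − m + 1` is prime then `μ_{Î(G,H)}(H,G) = 0`. -/
theorem mobius_Ihat_eq_zero_GL_block (p n m : ℕ) [Fact p.Prime] (hp_odd : Odd p)
    (hn : n.Prime) (hm : 1 ≤ m) (hmn : m < n)
    (hnm : (n - m + 1).Prime)
    (W : Submodule (ZMod p) (Fin n → ZMod p))
    (hW : W = Submodule.span (ZMod p)
      {v | ∃ i : Fin n, (i : ℕ) < m ∧ v = Pi.single i (1 : ZMod p)})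
    (H : Subgroup ((Fin n → ZMod p) ≃ₗ[ZMod p] (Fin n → ZMod p)))
    (hH : ∀ g : (Fin n → ZMod p) ≃ₗ[ZMod p] (Fin n → ZMod p),
      g ∈ H ↔ ((∀ i : Fin n, m ≤ (i : ℕ) → g (Pi.single i (1 : ZMod p)) = Pi.single i 1) ∧
        Submodule.map (g : (Fin n → ZMod p) →ₗ[ZMod p] (Fin n → ZMod p)) W = W))
    (mu : Subgroup ((Fin n → ZMod p) ≃ₗ[ZMod p] (Fin n → ZMod p)) →
      Subgroup ((Fin n → ZMod p) ≃ₗ[ZMod p] (Fin n → ZMod p)) → ℤ)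
    (hmu : IsMobius (Ihat (⊤ : Subgroup ((Fin n → ZMod p) ≃ₗ[ZMod p] (Fin n → ZMod p))) H) mu) :
    mu H ⊤ = 0 := by
  have h2 : (2 : ZMod p) ≠ 0 := by
    intro h
    have h' : ((2 : ℕ) : ZMod p) = 0 := by exact_mod_cast h
    rw [ZMod.natCast_eq_zero_iff] at h'
    have := (Nat.prime_dvd_prime_iff_eq Fact.out Nat.prime_two).1 h'
    subst this
    exact absurd hp_odd (by decide)
  let c : (Fin n → ZMod p) ≃ₗ[ZMod p] (Fin n → ZMod p) := LinearEquiv.neg (ZMod p)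
  have hcH : c ∉ H := by
    intro hc
    have h1 := ((hH c).1 hc).1 ⟨m, hmn⟩ le_rfl
    have h3 := congrFun h1 ⟨m, hmn⟩
    have h4 : (-1 : ZMod p) = 1 := by simpa [c] using h3
    apply h2
    linear_combination -h4
  have hWb : W ≠ ⊥ := by
    intro hb
    have : (Pi.single ⟨0, by omega⟩ 1 : Fin n → ZMod p) ∈ W := by
      rw [hW]; exact Submodule.subset_span ⟨⟨0, by omega⟩, Nat.lt_of_succ_le hm, rfl⟩
    rw [hb, Submodule.mem_bot] at this
    simpa using congrFun this ⟨0, by omega⟩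
  have hWt : W ≠ ⊤ := by
    intro ht
    have hle : W ≤ LinearMap.ker (LinearMap.proj (R := ZMod p) (φ := fun _ : Fin n => ZMod p) ⟨m, hmn⟩) := by
      rw [hW, Submodule.span_le]
      rintro v ⟨i, hi, rfl⟩
      have : (⟨m, hmn⟩ : Fin n) ≠ i := by rintro rfl; simp at hi
      simp [Pi.single_eq_of_ne this]
    have := hle (show (Pi.single ⟨m, hmn⟩ 1 : Fin n → ZMod p) ∈ W by rw [ht]; trivial)
    simp at this
  have hHI : H ∈ redIdeal ⊤ H := by
    have hle : H ≤ sstab ⊤ W := fun g hg => ⟨trivial, ((hH g).1 hg).2⟩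
    exact ⟨_, ⟨W, hWb, hWt, hle, rfl⟩, le_rfl, hle⟩
  have hsup : ∀ x ∈ redIdeal ⊤ H, x ⊔ Subgroup.zpowers c ∈ redIdeal ⊤ H := by
    rintro x ⟨M, hM, hx1, hx2⟩
    refine ⟨M, hM, hx1.trans le_sup_left, sup_le hx2 ?_⟩
    obtain ⟨U, -, -, -, rfl⟩ := hM
    rw [Subgroup.zpowers_le]
    exact neg_mem_sstab_aux U
  have htop : (⊤ : Subgroup ((Fin n → ZMod p) ≃ₗ[ZMod p] (Fin n → ZMod p))) ∉ redIdeal ⊤ H := by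
    rintro ⟨M, ⟨U, hU1, hU2, -, rfl⟩, -, hx2⟩
    exact top_not_le_sstab_aux U hU1 hU2 hx2
  have htopm : (⊤ : Subgroup ((Fin n → ZMod p) ≃ₗ[ZMod p] (Fin n → ZMod p))) ∈ Ihat ⊤ H :=
    Or.inr (Or.inr rfl)
  have hcases : ∀ x ∈ Ihat ⊤ H, x ∈ redIdeal ⊤ H ∨ x = ⊤ := by
    rintro x (hx | rfl | rfl)
    · exact Or.inl hx
    · exact Or.inl hHI
    · exact Or.inr rfl
  have : Finite ((Fin n → ZMod p) ≃ₗ[ZMod p] (Fin n → ZMod p)) :=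
    Finite.of_injective (fun e => (e : (Fin n → ZMod p) → (Fin n → ZMod p))) DFunLike.coe_injective
  have key := weisner_aux (Ihat ⊤ H) (mu H) H (Subgroup.zpowers c)
    (by
      intro x hx
      rcases hcases x hx with h | rfl
      · exact Or.inl (hsup x h)
      · rw [top_sup_eq]; exact htopm)
    (by
      intro x hx
      rcases hcases x hx with ⟨M, -, h, -⟩ | rfl
      · exact h
      · exact le_top)
    (by rw [Subgroup.zpowers_le]; exact hcH)
    (fun y hy hlt => hmu.2.2 H (Or.inl hHI) y hy hlt) ⊤ htopm le_top
  have hset : {t | t ∈ Ihat ⊤ H ∧ t ⊔ Subgroup.zpowers c = ⊤} = {⊤} := by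
    ext t
    simp only [Set.mem_ofPred_eq, Set.mem_singleton_iff]
    constructor
    · rintro ⟨ht, he⟩
      rcases hcases t ht with h | h
      · exact absurd (he ▸ hsup t h) htop
      · exact h
    · rintro rfl
      exact ⟨htopm, top_sup_eq _⟩
  rw [hset, finsum_mem_singleton] at key
  exact key
end
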